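/- Let C be an m×n real matrix, V an n×k real matrix with orthonormal columns (VᵀV = I_k), P = VVᵀ, and μ ≥ 0 a real number. The minimizer X* = C·(I − (μ/(1+μ))·P) of the objective f(X) = ∑_{i,j} (X_{ij} − C_{ij})² + μ·trace(X·P·Xᵀ) is unique: for every m×n real matrix X with X ≠ X*, f(X*) < f(X). -/

import Mathlib

open Matrix

/-- The Tikhonov-regularized objective
`f(X) = ∑_{i,j} (X_{ij} − C_{ij})² + μ·trace(X·P·Xᵀ)`. -/
noncomputable def tikhonovObjective (m n : ℕ) (C : Matrix (Fin m) (Fin n) ℝ)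
    (P : Matrix (Fin n) (Fin n) ℝ) (μ : ℝ) (X : Matrix (Fin m) (Fin n) ℝ) : ℝ :=
  (∑ i, ∑ j, (X i j - C i j) ^ 2) + μ * Matrix.trace (X * P * Xᵀ)

/-!
Completing the square. If `S * (1 + μ • P) = C` with `1 + μ • P` symmetric, then
`f X - f S = trace ((X - S) * (1 + μ • P) * (X - S)ᵀ)`, which is positive for `X ≠ S` as soon as
`1 + μ • P` is positive definite. For an orthogonal projection `P` this holds for all `μ > -1`, and
the inverse of `1 + μ • P` is the soft projection `1 - (μ / (1 + μ)) • P`.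
-/

section Projection

theorem one_sub_smul_mul_one_add_smul_of_isIdempotentElem {K R : Type*} [Field K] [Ring R]
    [Algebra K R] {p : R} (hp : IsIdempotentElem p) {μ : K} (hμ : 1 + μ ≠ 0) :
    (1 - (μ / (1 + μ)) • p) * (1 + μ • p) = 1 := by
  have coeff_eq_zero : μ - μ / (1 + μ) - μ / (1 + μ) * μ = 0 := by
    field_simp
    ring
  calc (1 - (μ / (1 + μ)) • p) * (1 + μ • p)
      = 1 + (μ - μ / (1 + μ) - μ / (1 + μ) * μ) • p := by
        simp only [sub_mul, mul_add, one_mul, mul_one, smul_mul_smul_comm, hp.eq]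
        module
    _ = 1 := by rw [coeff_eq_zero, zero_smul, add_zero]

theorem isStarProjection_mul_conjTranspose {n k R : Type*} [Fintype n] [Fintype k] [DecidableEq k]
    [Semiring R] [StarRing R] {V : Matrix n k R} (hV : Vᴴ * V = 1) :
    IsStarProjection (V * Vᴴ) where
  isIdempotentElem := by
    rw [IsIdempotentElem, Matrix.mul_assoc, ← Matrix.mul_assoc Vᴴ, hV, Matrix.one_mul]
  isSelfAdjoint := isHermitian_mul_conjTranspose_self V

open scoped MatrixOrder ComplexOrder in
theorem posDef_one_add_smul_of_isStarProjection {n 𝕜 : Type*} [Fintype n] [DecidableEq n]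
    [RCLike 𝕜] {P : Matrix n n 𝕜} (hP : IsStarProjection P) {μ : ℝ} (hμ : -1 < μ) :
    (1 + μ • P).PosDef := by
  rcases le_total 0 μ with μ_nonneg | μ_nonpos
  · have hP_psd : P.PosSemidef := nonneg_iff_posSemidef.mp hP.nonneg
    exact PosDef.one.add_posSemidef (hP_psd.smul μ_nonneg)
  · have hQ_psd : (1 - P).PosSemidef := nonneg_iff_posSemidef.mp hP.one_sub_nonneg
    have decomposition : 1 + μ • P = (1 + μ) • (1 : Matrix n n 𝕜) + (-μ) • (1 - P) := by module
    rw [decomposition]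
    exact (PosDef.one.smul (by linarith)).add_posSemidef (hQ_psd.smul (by linarith))

end Projection

section Trace

variable {m n R : Type*} [Fintype m] [Fintype n]

theorem trace_mul_mul_conjTranspose_pos [Ring R] [PartialOrder R] [StarRing R]
    [IsOrderedCancelAddMonoid R] {A : Matrix n n R} (hA : A.PosDef) {D : Matrix m n R}
    (hD : D ≠ 0) : 0 < (D * A * Dᴴ).trace := by
  have trace_eq : (D * A * Dᴴ).trace = ∑ i, star (star (D i)) ⬝ᵥ (A *ᵥ star (D i)) := by
    simp only [trace, diag_apply, star_star, dotProduct_mulVec]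
    rfl
  obtain ⟨i, hi⟩ : ∃ i, D i ≠ 0 := Function.ne_iff.mp hD
  rw [trace_eq]
  exact Finset.sum_pos' (fun j _ ↦ hA.posSemidef.dotProduct_mulVec_nonneg _)
    ⟨i, Finset.mem_univ i, hA.dotProduct_mulVec_pos (star_ne_zero.mpr hi)⟩

theorem trace_mul_transpose_self_eq_sum_sq [CommSemiring R] (X : Matrix m n R) :
    (X * Xᵀ).trace = ∑ i, ∑ j, X i j ^ 2 := by
  simp only [trace, diag_apply, mul_apply, transpose_apply, sq]

theorem trace_sub_mul_mul_transpose_sub [CommRing R] {A : Matrix n n R} (hA : A.IsSymm)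
    (X S : Matrix m n R) :
    ((X - S) * A * (X - S)ᵀ).trace =
      (X * A * Xᵀ).trace - 2 * (S * A * Xᵀ).trace + (S * A * Sᵀ).trace := by
  have cross_symm : (X * A * Sᵀ).trace = (S * A * Xᵀ).trace := by
    rw [← trace_transpose]
    simp only [transpose_mul, transpose_transpose, hA.eq, Matrix.mul_assoc]
  simp only [transpose_sub, Matrix.sub_mul, Matrix.mul_sub, trace_sub, cross_symm]
  ring

end Trace

section Tikhonov

variable {m n : ℕ} {C S X : Matrix (Fin m) (Fin n) ℝ} {P : Matrix (Fin n) (Fin n) ℝ} {μ : ℝ}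

theorem tikhonovObjective_eq_trace (C : Matrix (Fin m) (Fin n) ℝ) (P : Matrix (Fin n) (Fin n) ℝ)
    (μ : ℝ) (X : Matrix (Fin m) (Fin n) ℝ) :
    tikhonovObjective m n C P μ X =
      (X * (1 + μ • P) * Xᵀ).trace - 2 * (C * Xᵀ).trace + (C * Cᵀ).trace := by
  have sum_sq_eq : ∑ i, ∑ j, (X i j - C i j) ^ 2 =
      (X * Xᵀ).trace - 2 * (C * Xᵀ).trace + (C * Cᵀ).trace := by
    simpa only [Matrix.mul_one, trace_mul_transpose_self_eq_sum_sq (X - C), Matrix.sub_apply] using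
      trace_sub_mul_mul_transpose_sub isSymm_one X C
  rw [tikhonovObjective, sum_sq_eq, Matrix.mul_add, Matrix.add_mul, trace_add, Matrix.mul_one,
    Matrix.mul_smul, Matrix.smul_mul, trace_smul, smul_eq_mul]
  ring

theorem tikhonovObjective_sub_eq_trace (hA : (1 + μ • P).IsSymm) (hS : S * (1 + μ • P) = C)
    (X : Matrix (Fin m) (Fin n) ℝ) :
    tikhonovObjective m n C P μ X - tikhonovObjective m n C P μ S =
      ((X - S) * (1 + μ • P) * (X - S)ᵀ).trace := by
  rw [tikhonovObjective_eq_trace, tikhonovObjective_eq_trace, trace_sub_mul_mul_transpose_sub hA,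
    hS]
  ring

theorem tikhonovObjective_lt_of_posDef (hA : (1 + μ • P).PosDef) (hS : S * (1 + μ • P) = C)
    (hX : X ≠ S) : tikhonovObjective m n C P μ S < tikhonovObjective m n C P μ X := by
  have hA_symm : (1 + μ • P).IsSymm := hA.isHermitian
  rw [← sub_pos, tikhonovObjective_sub_eq_trace hA_symm hS, ← conjTranspose_eq_transpose_of_trivial]
  exact trace_mul_mul_conjTranspose_pos hA (sub_ne_zero.mpr hX)

theorem soft_projection_unique_minimizer_general (C : Matrix (Fin m) (Fin n) ℝ)
    (hP : IsStarProjection P) (hμ : -1 < μ) (hX : X ≠ C * (1 - (μ / (1 + μ)) • P)) :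
    tikhonovObjective m n C P μ (C * (1 - (μ / (1 + μ)) • P)) <
      tikhonovObjective m n C P μ X := by
  have normal_eq : C * (1 - (μ / (1 + μ)) • P) * (1 + μ • P) = C := by
    rw [Matrix.mul_assoc, one_sub_smul_mul_one_add_smul_of_isIdempotentElem hP.isIdempotentElem
      (by linarith), Matrix.mul_one]
  exact tikhonovObjective_lt_of_posDef (posDef_one_add_smul_of_isStarProjection hP hμ) normal_eq hX

end Tikhonov

theorem soft_projection_unique_minimizer
    (m n k : ℕ) (C : Matrix (Fin m) (Fin n) ℝ) (V : Matrix (Fin n) (Fin k) ℝ)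
    (hV : Vᵀ * V = 1) (μ : ℝ) (hμ : 0 ≤ μ) :
    ∀ X : Matrix (Fin m) (Fin n) ℝ, X ≠ C * (1 - (μ / (1 + μ)) • (V * Vᵀ)) →
      tikhonovObjective m n C (V * Vᵀ) μ (C * (1 - (μ / (1 + μ)) • (V * Vᵀ))) <
        tikhonovObjective m n C (V * Vᵀ) μ X := by
  rw [← conjTranspose_eq_transpose_of_trivial] at hV ⊢
  exact fun _ ↦ soft_projection_unique_minimizer_general C (isStarProjection_mul_conjTranspose hV)
    (by linarith)
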